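/- Let m be a model, σ an environment, d a description having the same tree shape as m, and x a variable occurring in both m and d. Then d is generated by m in σ if and only if the x-factor d.x is generated by the x-factor m.x in σ and the x-context d.x̄ is generated by the x-context m.x̄ in σ; formally, d ∈ m[σ] ⟺ (d.x ∈ m.x[σ]) ∧ (d.x̄ ∈ m.x̄[σ]). -/

import Mathlib

/-- A k-ary pattern: a relation between a whole value and a list of part values,
such that the whole is unique given the parts. -/
structure Pattern (V : Type) where
  rel : V → List V → Prop
  functional : ∀ (vs : List V) (v v' : V), rel v vs → rel v' vs → v = v'

/-- A model: a finite tree whose nodes carry variables (naturals) and are either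
unknowns, expressions, or pattern nodes with submodels. -/
inductive Model (V E : Type) : Type where
  | unknown : ℕ → Model V E
  | expr : ℕ → E → Model V E
  | pat : ℕ → Pattern V → List (Model V E) → Model V E

/-- A description: a finite tree assigning a value to each variable. -/
inductive Descr (V : Type) : Type where
  | atom : ℕ → V → Descr V
  | comp : ℕ → V → Pattern V → List (Descr V) → Descr V

def Descr.value {V : Type} : Descr V → V
  | .atom _ v => v
  | .comp _ v _ _ => v

def Descr.rootVar {V : Type} : Descr V → ℕ
  | .atom x _ => x
  | .comp x _ _ _ => x

def Model.rootVar {V E : Type} : Model V E → ℕ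
  | .unknown x => x
  | .expr x _ => x
  | .pat x _ _ => x

/-- Variables of a model. -/
def Model.vars {V E : Type} : Model V E → List ℕ
  | .unknown x => [x]
  | .expr x _ => [x]
  | .pat x _ ms => x :: (ms.attach.map (fun m => m.1.vars)).flatten
decreasing_by
  simp_wf
  have := List.sizeOf_lt_of_mem m.2
  omega

/-- Variables of a description. -/
def Descr.vars {V : Type} : Descr V → List ℕ
  | .atom x _ => [x]
  | .comp x _ _ ds => x :: (ds.attach.map (fun d => d.1.vars)).flatten
decreasing_by
  simp_wf
  have := List.sizeOf_lt_of_mem d.2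
  omega

/-- The generation relation `d ∈ m[σ]`, parameterized by a partial evaluation
function for expressions. -/
inductive Gen {V E : Type} (ev : E → (ℕ → Option V) → Option V) :
    Model V E → (ℕ → Option V) → Descr V → Prop where
  | unknown (x : ℕ) (σ : ℕ → Option V) (v : V) :
      Gen ev (.unknown x) σ (.atom x v)
  | expr (x : ℕ) (e : E) (σ : ℕ → Option V) (v : V) :
      ev e σ = some v → Gen ev (.expr x e) σ (.atom x v)
  | pat (x : ℕ) (P : Pattern V) (ms : List (Model V E)) (σ : ℕ → Option V)
      (v : V) (ds : List (Descr V)) :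
      ms.length = ds.length →
      P.rel v (ds.map Descr.value) →
      (∀ (i : ℕ) (h₁ : i < ms.length) (h₂ : i < ds.length),
        Gen ev (ms.get ⟨i, h₁⟩) σ (ds.get ⟨i, h₂⟩)) →
      Gen ev (.pat x P ms) σ (.comp x v P ds)

/-- `Model.Splits m x f c`: the variable `x` occurs in `m`, the `x`-factor (subtree
rooted at `x`) is `f`, and the `x`-context (with the subtree at `x` replaced by an
unknown) is `c`. -/
inductive Model.Splits {V E : Type} : Model V E → ℕ → Model V E → Model V E → Prop where
  | here (m : Model V E) : Model.Splits m m.rootVar m (.unknown m.rootVar)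
  | there (y : ℕ) (P : Pattern V) (ms : List (Model V E)) (i : ℕ) (h : i < ms.length)
      (x : ℕ) (f c : Model V E) :
      Model.Splits (ms.get ⟨i, h⟩) x f c →
      Model.Splits (.pat y P ms) x f (.pat y P (ms.set i c))

/-- `Descr.Splits d x f c`: the variable `x` occurs in `d`, the `x`-factor is `f`,
and the `x`-context (subtree at `x` replaced by an atomic description carrying the
value at `x`) is `c`. -/
inductive Descr.Splits {V : Type} : Descr V → ℕ → Descr V → Descr V → Prop where
  | here (d : Descr V) : Descr.Splits d d.rootVar d (.atom d.rootVar d.value)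
  | there (y : ℕ) (v : V) (P : Pattern V) (ds : List (Descr V)) (i : ℕ) (h : i < ds.length)
      (x : ℕ) (f c : Descr V) :
      Descr.Splits (ds.get ⟨i, h⟩) x f c →
      Descr.Splits (.comp y v P ds) x f (.comp y v P (ds.set i c))


theorem Model.vars_pat {V E : Type} (x : ℕ) (P : Pattern V) (ms : List (Model V E)) :
    (Model.pat x P ms).vars = x :: (ms.map Model.vars).flatten := by
  rw [Model.vars]
  simp

theorem Descr.vars_comp {V : Type} (x : ℕ) (v : V) (P : Pattern V) (ds : List (Descr V)) :
    (Descr.comp x v P ds).vars = x :: (ds.map Descr.vars).flatten := by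
  rw [Descr.vars]
  simp

theorem Model.rootVar_mem {V E : Type} (m : Model V E) : m.rootVar ∈ m.vars := by
  cases m <;> simp [Model.vars, Model.rootVar]

theorem Descr.rootVar_mem {V : Type} (d : Descr V) : d.rootVar ∈ d.vars := by
  cases d <;> simp [Descr.vars, Descr.rootVar]

theorem Gen.vars_eq {V E : Type} {ev : E → (ℕ → Option V) → Option V} {m : Model V E}
    {σ : ℕ → Option V} {d : Descr V} (h : Gen ev m σ d) : m.vars = d.vars := by
  induction h with
  | unknown => simp [Model.vars, Descr.vars]
  | expr => simp [Model.vars, Descr.vars]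
  | pat x P ms σ v ds hl hr hg ih =>
    rw [Model.vars_pat, Descr.vars_comp]
    congr 2
    apply List.ext_getElem
    · simpa using hl
    · intro i h1 h2
      simpa using ih i (by simpa using h1) (by simpa using h2)

theorem Gen.rootVar_eq {V E : Type} {ev : E → (ℕ → Option V) → Option V} {m : Model V E}
    {σ : ℕ → Option V} {d : Descr V} (h : Gen ev m σ d) : m.rootVar = d.rootVar := by
  cases h <;> rfl

theorem Model.Splits.mem {V E : Type} {m f c : Model V E} {x : ℕ} (h : m.Splits x f c) :
    x ∈ m.vars ∧ x ∈ c.vars := by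
  induction h with
  | here m => exact ⟨m.rootVar_mem, by simp [Model.vars]⟩
  | there y P ms i h x f c hs ih =>
    rw [Model.vars_pat, Model.vars_pat]
    refine ⟨List.mem_cons_of_mem _ (List.mem_flatten.2 ⟨_, List.mem_map.2
      ⟨_, List.get_mem ms ⟨i, h⟩, rfl⟩, ih.1⟩), List.mem_cons_of_mem _ (List.mem_flatten.2
      ⟨_, List.mem_map.2 ⟨c, List.mem_set h c, rfl⟩, ih.2⟩)⟩

theorem Descr.Splits.mem {V : Type} {d f c : Descr V} {x : ℕ} (h : d.Splits x f c) :
    x ∈ d.vars ∧ c.value = d.value := by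
  induction h with
  | here d => exact ⟨d.rootVar_mem, rfl⟩
  | there y v P ds i h x f c hs ih =>
    rw [Descr.vars_comp]
    exact ⟨List.mem_cons_of_mem _ (List.mem_flatten.2 ⟨_, List.mem_map.2
      ⟨_, List.get_mem ds ⟨i, h⟩, rfl⟩, ih.1⟩), rfl⟩

theorem idx_unique {α : Type} (f : α → List ℕ) (l : List α) (h : ((l.map f).flatten).Nodup)
    (i j : ℕ) (hi : i < l.length) (hj : j < l.length) (x : ℕ)
    (hxi : x ∈ f l[i]) (hxj : x ∈ f l[j]) : i = j := by
  rw [List.nodup_flatten] at h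
  have h2 := List.pairwise_iff_getElem.1 h.2
  by_contra hne
  rcases Nat.lt_or_gt_of_ne hne with hlt | hlt
  · have := h2 i j (by simpa using hi) (by simpa using hj) hlt
    simp only [List.getElem_map] at this
    exact this hxi hxj
  · have := h2 j i (by simpa using hj) (by simpa using hi) hlt
    simp only [List.getElem_map] at this
    exact this hxj hxi

/-- Lemma 1 of the paper. Let `m` be a model, `σ` an environment,
`d` a description, and `x` a variable occurring in both `m` and `d` (witnessed by
the split of `m` at `x` into the `x`-factor `mx` and `x`-context `mc`, and the
split of `d` at `x` into `dx` and `dc`). Then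
`d ∈ m[σ] ↔ d.x ∈ m.x[σ] ∧ d.x̄ ∈ m.x̄[σ]`. -/
theorem gen_iff_factor_and_context {V E : Type}
    (ev : E → (ℕ → Option V) → Option V)
    (m : Model V E) (σ : ℕ → Option V) (d : Descr V) (x : ℕ)
    (mx mc : Model V E) (dx dc : Descr V)
    (hmnodup : m.vars.Nodup) (hdnodup : d.vars.Nodup)
    (hmsplit : m.Splits x mx mc) (hdsplit : d.Splits x dx dc) :
    Gen ev m σ d ↔ (Gen ev mx σ dx ∧ Gen ev mc σ dc) := by
  induction hmsplit generalizing d dx dc with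
  | here m =>
    generalize hx : m.rootVar = x at hdsplit
    cases hdsplit with
    | here =>
      exact ⟨fun h => ⟨h, Gen.unknown _ _ _⟩, fun h => h.1⟩
    | there y v P ds i h _ _ c hs =>
      constructor
      · intro hg
        exfalso
        have hr := hg.rootVar_eq
        rw [hx] at hr
        simp only [Descr.rootVar] at hr
        subst hr
        rw [Descr.vars_comp, List.nodup_cons] at hdnodup
        exact hdnodup.1 (List.mem_flatten.2 ⟨_, List.mem_map.2
          ⟨_, List.get_mem ds ⟨i, h⟩, rfl⟩, hs.mem.1⟩)
      · rintro ⟨-, hg⟩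
        cases hg
  | there y P ms i hi x f c hs ih =>
    rw [Model.vars_pat, List.nodup_cons] at hmnodup
    have hxm : x ∈ (ms.map Model.vars).flatten := List.mem_flatten.2 ⟨_, List.mem_map.2
          ⟨_, List.get_mem ms ⟨i, hi⟩, rfl⟩, hs.mem.1⟩
    cases hdsplit with
    | here =>
      constructor
      · intro hg
        exfalso
        have hr := hg.rootVar_eq
        simp only [Model.rootVar] at hr
        rw [hr] at hmnodup
        exact hmnodup.1 hxm
      · rintro ⟨-, hg⟩
        cases hg
    | there y' v P' ds j hj _ _ c' hs' =>
      rw [Descr.vars_comp, List.nodup_cons] at hdnodup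
      have hmi : (ms.get ⟨i, hi⟩).vars.Nodup :=
        (List.nodup_flatten.1 hmnodup.2).1 _ (List.mem_map.2 ⟨_, List.get_mem ms ⟨i, hi⟩, rfl⟩)
      have hdj : (ds.get ⟨j, hj⟩).vars.Nodup :=
        (List.nodup_flatten.1 hdnodup.2).1 _ (List.mem_map.2 ⟨_, List.get_mem ds ⟨j, hj⟩, rfl⟩)
      have hval : (ds.set j c').map Descr.value = ds.map Descr.value := by
        apply List.ext_getElem
        · simp
        · intro k h1 h2
          have := hs'.mem.2
          simp only [List.getElem_map, List.getElem_set]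
          split
          · next hjk => subst hjk; simpa using this
          · rfl
      constructor
      · intro hg
        cases hg with
        | pat _ _ _ _ _ _ hl hr hgs =>
        have hid : i < ds.length := hl ▸ hi
        have hij : i = j := by
          refine idx_unique Descr.vars ds hdnodup.2 i j hid hj x ?_ hs'.mem.1
          have := (hgs i hi hid).vars_eq
          have h3 := hs.mem.1
          rw [this] at h3
          exact h3
        subst hij
        have h4 := (ih _ _ _ hmi hdj hs').1 (hgs i hi hj)
        refine ⟨h4.1, Gen.pat _ _ _ _ _ _ (by simpa using hl) (by rw [hval]; exact hr) ?_⟩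
        intro k h1 h2
        simp only [List.get_eq_getElem, List.getElem_set]
        split
        · exact h4.2
        · exact hgs k (by simpa using h1) (by simpa using h2)
      · rintro ⟨hf, hg⟩
        cases hg with
        | pat _ _ _ _ _ _ hl hr hgs =>
        have hl' : ms.length = ds.length := by simpa using hl
        have hid : i < ds.length := hl' ▸ hi
        have hij : i = j := by
          by_contra hne
          have h5 := (hgs i (by simpa using hi) (by simpa using hid)).vars_eq
          simp only [List.get_eq_getElem, List.getElem_set_self,
            List.getElem_set_ne (Ne.symm hne)] at h5
          refine hne (idx_unique Descr.vars ds hdnodup.2 i j hid hj x ?_ hs'.mem.1)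
          rw [← h5]
          exact hs.mem.2
        subst hij
        have h6 := hgs i (by simpa using hi) (by simpa using hid)
        simp only [List.get_eq_getElem, List.getElem_set_self] at h6
        have h4 := (ih _ _ _ hmi hdj hs').2 ⟨hf, h6⟩
        refine Gen.pat _ _ _ _ _ _ hl' (by rw [hval] at hr; exact hr) ?_
        intro k h1 h2
        by_cases hk : i = k
        · subst hk; exact h4
        · have h7 := hgs k (by simpa using h1) (by simpa using h2)
          simp only [List.get_eq_getElem, List.getElem_set_ne hk] at h7
          exact h7
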